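/- (Existence of a transition point for the double Yukawa potential.) Let v₁ > v₂ > 0 and κ₁ > κ₂ > 0, and define ρ(s) := (πs)^{−1/2}·( v₁·exp(−κ₁²/(4s)) − v₂·exp(−κ₂²/(4s)) ) for s > 0 and E₂(A) := (1/2) ∫₀^∞ H(As)·ρ(s) ds for A > 0. Then E₂ takes both strictly positive and strictly negative values on (0,∞), and there exists a transition point A* > 0 with E₂(A*) = 0. -/

import Mathlib

open MeasureTheory

/-- The Jacobi theta function `θ₃(q) = Σ_{j ∈ ℤ} q^(j²)`. -/
noncomputable def theta3 (q : ℝ) : ℝ := ∑' j : ℤ, q ^ (j.natAbs ^ 2)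

/-- `Θ(t) := θ₃(e^{−t})`. -/
noncomputable def Θ (t : ℝ) : ℝ := theta3 (Real.exp (-t))

/-- `H(t) := t·Θ(t)·Θ'(t) + t²·Θ(t)·Θ''(t) − t²·(Θ'(t))²`. -/
noncomputable def Hfun (t : ℝ) : ℝ :=
  t * Θ t * deriv Θ t + t ^ 2 * Θ t * iteratedDeriv 2 Θ t - t ^ 2 * (deriv Θ t) ^ 2

/-!
With `D = t d/dt` one has `H = Θ D²Θ - (DΘ)² = Θ² D² log Θ`. Poisson summation,
`Θ(t) = √(π/t) Θ(π²/t)`, changes `log Θ` under `t ↦ π²/t` only by an affine function of `log t`,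
which `D²` kills, so `H(t) = (π/t) H(π²/t)`. The same equation gives `-DΘ ≤ Θ/2`, whence `H > 0` for
`t > 3/2`, and then for all `t > 0` by symmetry. Moreover `H` decays exponentially at infinity,
hence rapidly at both ends.

Scaling the integral shows that `E₂(A)` is a positive multiple of
`v₁ G(κ₁² A / 4) - v₂ G(κ₂² A / 4)`, where `G(x) = ∫₀^∞ u^(-1/2) H(u) e^(-x/u) du` is positive,
continuous up to `0`, and decays faster than any power of `x`. At `A = 0` the difference is
`(v₁ - v₂) G(0) > 0`. It cannot stay nonnegative, for then `G(l x) ≥ (v₂ / v₁) G(x)` with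
`l = κ₁² / κ₂² > 1`, and iterating this bounds `G` from below by a power of `x`.
-/

open Asymptotics Filter Real Set
open scoped Nat Topology

/-- The Euler operator `t d/dt`, in terms of which
`H = Θ · (t d/dt)² Θ - ((t d/dt) Θ)²`. -/
noncomputable def eulerDeriv (f : ℝ → ℝ) (t : ℝ) : ℝ := t * deriv f t

/-- The Hankel determinant `f · D²f - (Df)²` for `D = t d/dt`, equal to `f² · D² log f` where
`f ≠ 0`. -/
noncomputable def eulerHankel (f : ℝ → ℝ) (t : ℝ) : ℝ :=
  f t * eulerDeriv (eulerDeriv f) t - eulerDeriv f t ^ 2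

/-- The even moments `∑ n^(2k) e^(-t n²)` of the theta series, equal to `(-1)ᵏ` times the `k`-th
derivative of `Θ`. -/
noncomputable def thetaMoment (k : ℕ) (t : ℝ) : ℝ :=
  ∑' n : ℤ, ((n : ℝ) ^ 2) ^ k * exp (-t * (n : ℝ) ^ 2)

/-- The Laplace transform of `h` in the reciprocal variable, `x ↦ ∫₀^∞ h(u) e^(-x/u) du`: each of
the two Yukawa terms of the energy is, up to scaling, such a transform. -/
noncomputable def reciprocalLaplace (h : ℝ → ℝ) (x : ℝ) : ℝ :=
  ∫ u in Ioi 0, h u * exp (-x / u)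

section EulerOperator

variable {f g : ℝ → ℝ} {b c p t : ℝ}

lemma eulerDeriv_eulerDeriv (hf : DifferentiableAt ℝ (deriv f) t) :
    eulerDeriv (eulerDeriv f) t = t * deriv f t + t ^ 2 * iteratedDeriv 2 f t := by
  have hderiv : HasDerivAt (eulerDeriv f) (1 * deriv f t + t * deriv (deriv f) t) t :=
    (hasDerivAt_id' t).mul hf.hasDerivAt
  rw [eulerDeriv, hderiv.deriv, iteratedDeriv_succ, iteratedDeriv_one]
  ring

lemma eulerDeriv_of_functional_equation
    (hfg : ∀ t, 0 < t → f t = c * t ^ p * g (b / t)) (ht : 0 < t)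
    (hg : DifferentiableAt ℝ g (b / t)) :
    eulerDeriv f t = c * t ^ p * (p * g (b / t) - eulerDeriv g (b / t)) := by
  have hpow : HasDerivAt (fun s : ℝ => c * s ^ p) (c * (p * t ^ (p - 1))) t :=
    (hasDerivAt_rpow_const (.inl ht.ne')).const_mul c
  have hdiv : HasDerivAt (fun s : ℝ => b / s) (-b / t ^ 2) t := by
    simpa using (hasDerivAt_const t b).fun_div (hasDerivAt_id' t) ht.ne'
  have hprod : HasDerivAt (fun s => c * s ^ p * g (b / s))
      (c * (p * t ^ (p - 1)) * g (b / t) + c * t ^ p * (deriv g (b / t) * (-b / t ^ 2))) t :=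
    hpow.mul (hg.hasDerivAt.comp t hdiv)
  have hf : f =ᶠ[𝓝 t] fun s => c * s ^ p * g (b / s) :=
    (eventually_gt_nhds ht).mono hfg
  rw [eulerDeriv, eulerDeriv, hf.deriv_eq, hprod.deriv, rpow_sub_one ht.ne']
  field_simp
  ring

/-- Differentiating the functional equation once gives an equation of the same kind between
`D f` and `p f - D f`, so the same lemma applies twice. -/
lemma eulerHankel_of_functional_equation (hb : 0 < b)
    (hf : ∀ t, 0 < t → DifferentiableAt ℝ f t)
    (hDf : ∀ t, 0 < t → DifferentiableAt ℝ (eulerDeriv f) t)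
    (hfe : ∀ t, 0 < t → f t = c * t ^ p * f (b / t)) (ht : 0 < t) :
    eulerHankel f t = c ^ 2 * t ^ (2 * p) * eulerHankel f (b / t) := by
  have hw : 0 < b / t := by positivity
  have hD : ∀ s, 0 < s → eulerDeriv f s = c * s ^ p * (p * f (b / s) - eulerDeriv f (b / s)) :=
    fun s hs => eulerDeriv_of_functional_equation hfe hs (hf _ (by positivity))
  have hsub : HasDerivAt (fun w => p * f w - eulerDeriv f w)
      (p * deriv f (b / t) - deriv (eulerDeriv f) (b / t)) (b / t) :=
    ((hf _ hw).hasDerivAt.const_mul p).sub (hDf _ hw).hasDerivAt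
  have hDD := eulerDeriv_of_functional_equation
    (g := fun w => p * f w - eulerDeriv f w) hD ht hsub.differentiableAt
  have hDsub : eulerDeriv (fun w => p * f w - eulerDeriv f w) (b / t) =
      p * eulerDeriv f (b / t) - eulerDeriv (eulerDeriv f) (b / t) := by
    rw [eulerDeriv, hsub.deriv, eulerDeriv, eulerDeriv]
    ring
  have hsq : t ^ (2 * p) = (t ^ p) ^ 2 := by rw [mul_comm, rpow_mul ht.le, rpow_two]
  rw [eulerHankel, eulerHankel, hDD, hDsub, hD t ht, hfe t ht, hsq]
  ring

lemma isBigO_rpow_nhdsGT_zero_of_functional_equation {q : ℝ} (hb : 0 < b)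
    (hfg : ∀ t, 0 < t → f t = c * t ^ p * g (b / t)) (hg : g =O[atTop] (· ^ q)) :
    f =O[𝓝[>] 0] (· ^ (p - q)) := by
  have hdiv : Tendsto (fun t : ℝ => b / t) (𝓝[>] 0) atTop := by
    simpa only [div_eq_mul_inv] using tendsto_inv_nhdsGT_zero.const_mul_atTop hb
  have hpos : ∀ᶠ t : ℝ in 𝓝[>] 0, 0 < t := self_mem_nhdsWithin
  have hprod : (fun t => c * (t ^ p * g (b / t))) =O[𝓝[>] 0] fun t => t ^ p * (b / t) ^ q :=
    ((isBigO_refl _ _).mul (hg.comp_tendsto hdiv)).const_mul_left c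
  have hpow : (fun t : ℝ => t ^ p * (b / t) ^ q) =ᶠ[𝓝[>] 0] fun t => b ^ q * t ^ (p - q) := by
    filter_upwards [hpos] with t ht
    rw [div_rpow hb.le ht.le, rpow_sub ht]
    ring
  refine IsBigO.congr' (hprod.trans_eventuallyEq hpow) ?_ .rfl |>.trans
    (isBigO_const_mul_self _ _ _)
  filter_upwards [hpos] with t ht
  rw [hfg t ht, mul_assoc]

end EulerOperator

section ThetaMoments

variable {s t : ℝ}

lemma summable_thetaMoment (k : ℕ) (ht : 0 < t) :
    Summable fun n : ℤ => ((n : ℝ) ^ 2) ^ k * exp (-t * (n : ℝ) ^ 2) := by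
  have hsum := summable_pow_mul_jacobiTheta₂_term_bound 0 (T := t / π) (by positivity) (2 * k)
  refine hsum.congr fun n => ?_
  have hexp : -π * (t / π * (n : ℝ) ^ 2 - 2 * 0 * |(n : ℝ)|) = -t * (n : ℝ) ^ 2 := by
    field_simp
    ring
  rw [Int.cast_abs, hexp, pow_mul, sq_abs]

lemma hasDerivAt_thetaMoment (k : ℕ) (ht : 0 < t) :
    HasDerivAt (thetaMoment k) (-thetaMoment (k + 1) t) t := by
  have hterm : ∀ (n : ℤ) (y : ℝ), HasDerivAt (fun y => ((n : ℝ) ^ 2) ^ k * exp (-y * (n : ℝ) ^ 2))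
      (-(((n : ℝ) ^ 2) ^ (k + 1) * exp (-y * (n : ℝ) ^ 2))) y := fun n y =>
    ((((hasDerivAt_neg y).mul_const ((n : ℝ) ^ 2)).exp).const_mul _).congr_deriv (by ring)
  have hbound : ∀ (n : ℤ), ∀ y ∈ Ioi (t / 2),
      ‖-(((n : ℝ) ^ 2) ^ (k + 1) * exp (-y * (n : ℝ) ^ 2))‖ ≤
        ((n : ℝ) ^ 2) ^ (k + 1) * exp (-(t / 2) * (n : ℝ) ^ 2) := by
    intro n y hy
    rw [norm_neg, norm_of_nonneg (by positivity)]
    gcongr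
    exact hy.le
  have hmem : t ∈ Ioi (t / 2) := half_lt_self ht
  have hderiv := hasDerivAt_tsum_of_isPreconnected (summable_thetaMoment (k + 1) (half_pos ht))
    isOpen_Ioi isPreconnected_Ioi (fun n y _ => hterm n y) hbound hmem
    (summable_thetaMoment k ht) hmem
  rwa [tsum_neg] at hderiv

lemma continuousOn_thetaMoment (k : ℕ) : ContinuousOn (thetaMoment k) (Ioi 0) :=
  fun _ ht => (hasDerivAt_thetaMoment k ht).continuousAt.continuousWithinAt

lemma thetaMoment_pos (k : ℕ) (ht : 0 < t) : 0 < thetaMoment k t :=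
  (summable_thetaMoment k ht).tsum_pos (fun _ => by positivity) 1 (by simp [exp_pos])

lemma thetaMoment_zero_antitoneOn : AntitoneOn (thetaMoment 0) (Ioi 0) := fun s hs t ht hst =>
  (summable_thetaMoment 0 ht).tsum_le_tsum (fun n => by gcongr) (summable_thetaMoment 0 hs)

lemma one_le_sq_intCast {n : ℤ} (hn : n ≠ 0) : (1 : ℝ) ≤ (n : ℝ) ^ 2 := by
  exact_mod_cast Int.add_one_le_iff.mpr (sq_pos_of_ne_zero hn)

lemma thetaMoment_succ_le_thetaMoment_add_two (k : ℕ) (ht : 0 < t) :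
    thetaMoment (k + 1) t ≤ thetaMoment (k + 2) t := by
  refine (summable_thetaMoment _ ht).tsum_le_tsum (fun n => ?_) (summable_thetaMoment _ ht)
  rcases eq_or_ne n 0 with rfl | hn
  · simp
  · gcongr
    · exact one_le_sq_intCast hn
    · lia

/-- The zero mode is absent from the higher moments, and all other modes decay at least like
`e^(-t)`. -/
lemma thetaMoment_succ_le_exp_mul (k : ℕ) (hs : 0 < s) (hst : s ≤ t) :
    thetaMoment (k + 1) t ≤ exp (s - t) * thetaMoment (k + 1) s := by
  rw [thetaMoment, thetaMoment, ← tsum_mul_left]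
  refine (summable_thetaMoment _ (hs.trans_le hst)).tsum_le_tsum (fun n => ?_)
    ((summable_thetaMoment _ hs).mul_left _)
  rcases eq_or_ne n 0 with rfl | hn
  · simp
  · have hn1 := one_le_sq_intCast hn
    rw [mul_left_comm, ← exp_add]
    gcongr
    nlinarith

lemma Θ_eq_thetaMoment_zero : Θ = thetaMoment 0 := by
  funext t
  refine tsum_congr fun n => ?_
  rw [← exp_nat_mul, Nat.cast_pow, Nat.cast_natAbs, Int.cast_abs, sq_abs, pow_zero, one_mul]
  ring_nf

lemma thetaMoment_zero_functional_equation (ht : 0 < t) :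
    thetaMoment 0 t = √π * t ^ (-(1 / 2) : ℝ) * thetaMoment 0 (π ^ 2 / t) := by
  have hpoisson := tsum_exp_neg_mul_int_sq (a := t / π) (by positivity)
  have hleft : -π * (t / π) = -t := by field_simp
  have hright : -π / (t / π) = -(π ^ 2 / t) := by field_simp
  have hfactor : 1 / (t / π) ^ (1 / 2 : ℝ) = √π * t ^ (-(1 / 2) : ℝ) := by
    rw [div_rpow ht.le pi_pos.le, one_div_div, rpow_neg ht.le, sqrt_eq_rpow, div_eq_mul_inv]
  rw [hleft, hright, hfactor] at hpoisson
  simpa only [thetaMoment, pow_zero, one_mul] using hpoisson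

lemma eulerDeriv_thetaMoment (k : ℕ) (ht : 0 < t) :
    eulerDeriv (thetaMoment k) t = -(t * thetaMoment (k + 1) t) := by
  rw [eulerDeriv, (hasDerivAt_thetaMoment k ht).deriv, mul_neg]

lemma hasDerivAt_deriv_thetaMoment (k : ℕ) (ht : 0 < t) :
    HasDerivAt (deriv (thetaMoment k)) (thetaMoment (k + 2) t) t := by
  have hneg := (hasDerivAt_thetaMoment (k + 1) ht).fun_neg
  rw [neg_neg] at hneg
  exact hneg.congr_of_eventuallyEq <|
    (eventually_gt_nhds ht).mono fun s hs => (hasDerivAt_thetaMoment k hs).deriv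

lemma eulerDeriv_eulerDeriv_thetaMoment (k : ℕ) (ht : 0 < t) :
    eulerDeriv (eulerDeriv (thetaMoment k)) t =
      t ^ 2 * thetaMoment (k + 2) t - t * thetaMoment (k + 1) t := by
  have hderiv := hasDerivAt_deriv_thetaMoment k ht
  rw [eulerDeriv_eulerDeriv hderiv.differentiableAt, iteratedDeriv_succ, iteratedDeriv_one,
    hderiv.deriv, (hasDerivAt_thetaMoment k ht).deriv]
  ring

/-- Equivalently, `√t Θ(t) = √π Θ(π²/t)` is increasing. -/
lemma mul_thetaMoment_one_le (ht : 0 < t) : t * thetaMoment 1 t ≤ thetaMoment 0 t / 2 := by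
  have hw : 0 < π ^ 2 / t := by positivity
  have hD := eulerDeriv_of_functional_equation
    (fun s hs => thetaMoment_zero_functional_equation hs) ht
    (hasDerivAt_thetaMoment 0 hw).differentiableAt
  rw [eulerDeriv_thetaMoment 0 ht, eulerDeriv_thetaMoment 0 hw] at hD
  have hrest : 0 ≤ √π * t ^ (-(1 / 2) : ℝ) * (π ^ 2 / t * thetaMoment 1 (π ^ 2 / t)) := by
    have := thetaMoment_pos 1 hw
    positivity
  rw [thetaMoment_zero_functional_equation ht]
  linarith

end ThetaMoments

section Hfun

variable {t : ℝ}

lemma Hfun_eq_eulerHankel (ht : 0 < t) : Hfun t = eulerHankel (thetaMoment 0) t := by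
  rw [Hfun, Θ_eq_thetaMoment_zero, eulerHankel,
    eulerDeriv_eulerDeriv (hasDerivAt_deriv_thetaMoment 0 ht).differentiableAt, eulerDeriv]
  ring

lemma Hfun_eq_thetaMoment (ht : 0 < t) :
    Hfun t = thetaMoment 0 t * (t ^ 2 * thetaMoment 2 t - t * thetaMoment 1 t) -
      (t * thetaMoment 1 t) ^ 2 := by
  rw [Hfun_eq_eulerHankel ht, eulerHankel, eulerDeriv_eulerDeriv_thetaMoment 0 ht,
    eulerDeriv_thetaMoment 0 ht, neg_sq]

lemma continuousOn_Hfun : ContinuousOn Hfun (Ioi 0) := by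
  have h0 := continuousOn_thetaMoment 0
  have h1 := continuousOn_thetaMoment 1
  have h2 := continuousOn_thetaMoment 2
  refine ContinuousOn.congr ?_ fun t ht => Hfun_eq_thetaMoment ht
  fun_prop

lemma Hfun_functional_equation (ht : 0 < t) :
    Hfun t = π * t ^ (-1 : ℝ) * Hfun (π ^ 2 / t) := by
  have hDdiff : ∀ s, 0 < s → DifferentiableAt ℝ (eulerDeriv (thetaMoment 0)) s := fun s hs =>
    differentiableAt_id.mul (hasDerivAt_deriv_thetaMoment 0 hs).differentiableAt
  have hH := eulerHankel_of_functional_equation (by positivity)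
    (fun s hs => (hasDerivAt_thetaMoment 0 hs).differentiableAt) hDdiff
    (fun s hs => thetaMoment_zero_functional_equation hs) ht
  rw [Hfun_eq_eulerHankel ht, Hfun_eq_eulerHankel (by positivity), hH, sq_sqrt pi_pos.le]
  norm_num

lemma Hfun_pos_of_three_halves_lt (ht : 3 / 2 < t) : 0 < Hfun t := by
  have ht0 : 0 < t := by linarith
  have hM0 := thetaMoment_pos 0 ht0
  have hM1 := thetaMoment_pos 1 ht0
  have hM12 : thetaMoment 1 t ≤ thetaMoment 2 t := thetaMoment_succ_le_thetaMoment_add_two 0 ht0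
  have hM1_le := mul_thetaMoment_one_le ht0
  calc 0 < t * thetaMoment 1 t * (thetaMoment 0 t * (t - 3 / 2)) := by
        have := sub_pos.mpr ht
        positivity
    _ ≤ t * thetaMoment 1 t * (thetaMoment 0 t * (t - 1) - t * thetaMoment 1 t) := by
        gcongr
        linarith
    _ = thetaMoment 0 t * (t ^ 2 * thetaMoment 1 t - t * thetaMoment 1 t) -
          (t * thetaMoment 1 t) ^ 2 := by ring
    _ ≤ Hfun t := by
        rw [Hfun_eq_thetaMoment ht0]
        gcongr

lemma Hfun_pos (ht : 0 < t) : 0 < Hfun t := by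
  have hpi := pi_gt_three
  rcases le_total π t with hle | hle
  · exact Hfun_pos_of_three_halves_lt (by linarith)
  · have hw : π ≤ π ^ 2 / t := by
      rw [le_div_iff₀ ht]
      nlinarith
    have hHw := Hfun_pos_of_three_halves_lt (t := π ^ 2 / t) (by linarith)
    rw [Hfun_functional_equation ht]
    positivity

lemma Hfun_le_mul_exp_neg (ht : 1 ≤ t) :
    Hfun t ≤ thetaMoment 0 1 * exp 1 * thetaMoment 2 1 * (t ^ 2 * exp (-t)) := by
  have ht0 : 0 < t := by linarith
  have hM0 := thetaMoment_pos 0 ht0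
  have hM1 := thetaMoment_pos 1 ht0
  have hM2 := thetaMoment_pos 2 ht0
  have hM0_le : thetaMoment 0 t ≤ thetaMoment 0 1 :=
    thetaMoment_zero_antitoneOn (mem_Ioi.mpr one_pos) ht0 ht
  have hM2_le := thetaMoment_succ_le_exp_mul 1 one_pos ht
  calc Hfun t ≤ thetaMoment 0 t * (t ^ 2 * thetaMoment 2 t) := by
        rw [Hfun_eq_thetaMoment ht0, mul_sub]
        have : 0 ≤ thetaMoment 0 t * (t * thetaMoment 1 t) := by positivity
        linarith [sq_nonneg (t * thetaMoment 1 t)]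
    _ ≤ thetaMoment 0 1 * (t ^ 2 * (exp (1 - t) * thetaMoment 2 1)) := by
        have := thetaMoment_pos 0 one_pos
        gcongr
    _ = thetaMoment 0 1 * exp 1 * thetaMoment 2 1 * (t ^ 2 * exp (-t)) := by
        rw [sub_eq_add_neg, exp_add]
        ring

lemma Hfun_isBigO_atTop (q : ℝ) : Hfun =O[atTop] (· ^ q) := by
  have hexp : Hfun =O[atTop] fun t => t ^ 2 * exp (-1 * t) := by
    refine .of_bound (thetaMoment 0 1 * exp 1 * thetaMoment 2 1) ?_
    filter_upwards [eventually_ge_atTop 1] with t ht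
    rw [norm_of_nonneg (Hfun_pos (by linarith)).le, norm_of_nonneg (by positivity), neg_one_mul]
    exact Hfun_le_mul_exp_neg ht
  have hpow : (fun t : ℝ => t ^ 2 * t ^ (q - 2)) =ᶠ[atTop] (· ^ q) := by
    filter_upwards [eventually_gt_atTop 0] with t ht
    rw [← rpow_two, ← rpow_add ht, add_sub_cancel]
  exact hexp.trans <| ((isBigO_refl _ _).mul
    (isLittleO_exp_neg_mul_rpow_atTop one_pos (q - 2)).isBigO).trans_eventuallyEq hpow

lemma integrableOn_rpow_mul_Hfun (p : ℝ) : IntegrableOn (fun u => u ^ p * Hfun u) (Ioi 0) := by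
  have hzero : Hfun =O[𝓝[>] 0] (· ^ (-p)) := by
    have := isBigO_rpow_nhdsGT_zero_of_functional_equation (by positivity)
      (fun s hs => Hfun_functional_equation hs) (Hfun_isBigO_atTop (p - 1))
    rwa [show -1 - (p - 1) = -p by ring] at this
  have := mellin_convergent_of_isBigO_scalar (s := p + 1) (a := p + 2)
    (continuousOn_Hfun.locallyIntegrableOn measurableSet_Ioi) (Hfun_isBigO_atTop _) (by linarith)
    hzero (by linarith)
  simpa using this

end Hfun

section ReciprocalLaplace

variable {h : ℝ → ℝ} {x : ℝ}

lemma aestronglyMeasurable_mul_exp_neg_div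
    (hh : AEStronglyMeasurable h (volume.restrict (Ioi 0))) (x : ℝ) :
    AEStronglyMeasurable (fun u => h u * exp (-x / u)) (volume.restrict (Ioi 0)) :=
  hh.mul (by fun_prop)

lemma norm_mul_exp_neg_div_le (hx : 0 ≤ x) :
    ∀ᵐ u ∂volume.restrict (Ioi 0), ‖h u * exp (-x / u)‖ ≤ ‖h u‖ := by
  filter_upwards [ae_restrict_mem measurableSet_Ioi] with u hu
  rw [norm_mul, norm_of_nonneg (exp_pos _).le]
  refine mul_le_of_le_one_right (norm_nonneg _) (exp_le_one_iff.mpr ?_)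
  exact div_nonpos_of_nonpos_of_nonneg (neg_nonpos.mpr hx) (le_of_lt hu)

lemma integrableOn_mul_exp_neg_div (hint : IntegrableOn h (Ioi 0)) (hx : 0 ≤ x) :
    IntegrableOn (fun u => h u * exp (-x / u)) (Ioi 0) :=
  hint.norm.mono' (aestronglyMeasurable_mul_exp_neg_div hint.aestronglyMeasurable x)
    (norm_mul_exp_neg_div_le hx)

lemma continuousOn_reciprocalLaplace (hint : IntegrableOn h (Ioi 0)) :
    ContinuousOn (reciprocalLaplace h) (Ici 0) :=
  continuousOn_of_dominated
    (fun x _ => aestronglyMeasurable_mul_exp_neg_div hint.aestronglyMeasurable x)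
    (fun _ hx => norm_mul_exp_neg_div_le hx) hint.norm (.of_forall fun u => by fun_prop)

lemma reciprocalLaplace_pos (hint : IntegrableOn h (Ioi 0)) (hpos : ∀ u, 0 < u → 0 < h u)
    (hx : 0 ≤ x) : 0 < reciprocalLaplace h x := by
  have hterm : ∀ u ∈ Ioi (0 : ℝ), 0 < h u * exp (-x / u) :=
    fun u hu => mul_pos (hpos u hu) (exp_pos _)
  have hnonneg : 0 ≤ᵐ[volume.restrict (Ioi 0)] fun u => h u * exp (-x / u) := by
    filter_upwards [ae_restrict_mem measurableSet_Ioi] with u hu using (hterm u hu).le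
  have hsupport : Ioi 0 ⊆ Function.support fun u => h u * exp (-x / u) :=
    fun u hu => (hterm u hu).ne'
  rw [reciprocalLaplace, setIntegral_pos_iff_support_of_nonneg_ae hnonneg
    (integrableOn_mul_exp_neg_div hint hx), inter_eq_right.mpr hsupport]
  simp

lemma pow_mul_exp_neg_div_le (k : ℕ) (hx : 0 ≤ x) {u : ℝ} (hu : 0 < u) :
    x ^ k * exp (-x / u) ≤ k ! * u ^ k := by
  have hexp := pow_div_factorial_le_exp (x / u) (by positivity) k
  rw [div_pow, div_le_iff₀ (by positivity), div_le_iff₀ (by positivity)] at hexp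
  rw [neg_div, exp_neg, ← div_eq_mul_inv, div_le_iff₀ (exp_pos _)]
  linarith

lemma pow_mul_reciprocalLaplace_le (k : ℕ) (hint : IntegrableOn h (Ioi 0))
    (hmoment : IntegrableOn (fun u => u ^ k * h u) (Ioi 0)) (hnonneg : ∀ u, 0 < u → 0 ≤ h u)
    (hx : 0 ≤ x) : x ^ k * reciprocalLaplace h x ≤ k ! * ∫ u in Ioi 0, u ^ k * h u := by
  rw [reciprocalLaplace, ← integral_const_mul, ← integral_const_mul]
  refine setIntegral_mono_on ((integrableOn_mul_exp_neg_div hint hx).const_mul _)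
    (hmoment.const_mul _) measurableSet_Ioi fun u hu => ?_
  linarith [mul_le_mul_of_nonneg_left (pow_mul_exp_neg_div_le k hx hu) (hnonneg u hu)]

end ReciprocalLaplace

section SignChange

/-- A lower bound `r G(x) ≤ G(lx)` with `l > 1` would iterate to polynomial decay at most. -/
lemma exists_mul_comp_mul_lt_of_rapid_decay {G : ℝ → ℝ} {v₁ v₂ a b : ℝ} (hG : 0 < G 1)
    (hdecay : ∀ k : ℕ, ∃ C, ∀ x, 0 < x → x ^ k * G x ≤ C)
    (hv₁ : 0 < v₁) (hv₂ : 0 < v₂) (hb : 0 < b) (hab : b < a) :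
    ∃ A, 0 < A ∧ v₁ * G (a * A) < v₂ * G (b * A) := by
  by_contra! hcontra
  set l := a / b with hl
  set r := v₂ / v₁ with hr
  have hl1 : 1 < l := (one_lt_div hb).mpr hab
  have hr0 : 0 < r := div_pos hv₂ hv₁
  have hstep : ∀ x, 0 < x → r * G x ≤ G (l * x) := by
    intro x hx
    have hle := hcontra (x / b) (by positivity)
    rw [mul_div_cancel₀ x hb.ne', mul_div_left_comm, mul_comm x, ← hl] at hle
    rw [hr, div_mul_eq_mul_div, div_le_iff₀' hv₁]
    exact hle
  have hiter : ∀ n : ℕ, r ^ n * G 1 ≤ G (l ^ n) := by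
    intro n
    induction n with
    | zero => simp
    | succ n ih =>
      calc r ^ (n + 1) * G 1 = r * (r ^ n * G 1) := by ring
        _ ≤ r * G (l ^ n) := by gcongr
        _ ≤ G (l ^ (n + 1)) := pow_succ' l n ▸ hstep _ (by positivity)
  obtain ⟨k, hk⟩ := pow_unbounded_of_one_lt (1 / r) hl1
  obtain ⟨C, hC⟩ := hdecay k
  have hrl : 1 < r * l ^ k := (div_lt_iff₀' hr0).mp hk
  obtain ⟨n, hn⟩ := pow_unbounded_of_one_lt (C / G 1) hrl
  refine absurd ((div_lt_iff₀ hG).mp hn) (not_lt.mpr ?_)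
  calc (r * l ^ k) ^ n * G 1 = (l ^ n) ^ k * (r ^ n * G 1) := by
        rw [mul_pow, pow_right_comm]
        ring
    _ ≤ (l ^ n) ^ k * G (l ^ n) := by
        gcongr
        exact hiter n
    _ ≤ C := hC _ (by positivity)

lemma exists_pos_and_neg_and_zero_of_continuousOn_Ici {F : ℝ → ℝ} (hF : ContinuousOn F (Ici 0))
    (hF0 : 0 < F 0) (hneg : ∃ B, 0 < B ∧ F B < 0) :
    (∃ A, 0 < A ∧ 0 < F A) ∧ (∃ A, 0 < A ∧ F A < 0) ∧ ∃ A, 0 < A ∧ F A = 0 := by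
  have hnear : ∀ᶠ A in 𝓝[>] 0, 0 < F A :=
    ((hF 0 self_mem_Ici).mono Ioi_subset_Ici_self).eventually (lt_mem_nhds hF0)
  obtain ⟨A, hFA, hA⟩ := (hnear.and self_mem_nhdsWithin).exists
  obtain ⟨B, hB, hFB⟩ := hneg
  obtain ⟨Z, hZ, hFZ⟩ : (0 : ℝ) ∈ F '' Ioi 0 :=
    isPreconnected_Ioi.intermediate_value hB hA (hF.mono Ioi_subset_Ici_self) ⟨hFB.le, hFA.le⟩
  exact ⟨⟨A, hA, hFA⟩, ⟨B, hB, hFB⟩, ⟨Z, hZ, hFZ⟩⟩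

lemma reciprocalLaplace_difference_changes_sign {h : ℝ → ℝ} {v₁ v₂ a b : ℝ}
    (hmoment : ∀ k : ℕ, IntegrableOn (fun u => u ^ k * h u) (Ioi 0))
    (hpos : ∀ u, 0 < u → 0 < h u) (hv₂ : 0 < v₂) (hv : v₂ < v₁) (hb : 0 < b) (hab : b < a) :
    let F := fun A => v₁ * reciprocalLaplace h (a * A) - v₂ * reciprocalLaplace h (b * A)
    (∃ A, 0 < A ∧ 0 < F A) ∧ (∃ A, 0 < A ∧ F A < 0) ∧ ∃ A, 0 < A ∧ F A = 0 := by
  intro F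
  have hint : IntegrableOn h (Ioi 0) := by simpa using hmoment 0
  have hG := continuousOn_reciprocalLaplace hint
  have hscaled : ∀ c, 0 < c → ContinuousOn (fun A => reciprocalLaplace h (c * A)) (Ici 0) :=
    fun c hc => hG.comp (by fun_prop) fun A hA => mul_nonneg hc.le hA
  refine exists_pos_and_neg_and_zero_of_continuousOn_Ici (F := F) ?_ ?_ ?_
  · exact ((hscaled a (hb.trans hab)).const_mul v₁).sub ((hscaled b hb).const_mul v₂)
  · have hG0 := reciprocalLaplace_pos hint hpos le_rfl
    simpa [F] using mul_lt_mul_of_pos_right hv hG0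
  · simp only [F, sub_neg]
    exact exists_mul_comp_mul_lt_of_rapid_decay (reciprocalLaplace_pos hint hpos zero_le_one)
      (fun k => ⟨_, fun x hx => pow_mul_reciprocalLaplace_le k hint (hmoment k)
        (fun u hu => (hpos u hu).le) hx.le⟩) (hv₂.trans hv) hv₂ hb hab

end SignChange

lemma setIntegral_Ioi_comp_mul_mul_rpow (H g : ℝ → ℝ) (p : ℝ) {A c : ℝ} (hA : 0 < A)
    (hc : 0 < c) :
    ∫ s in Ioi 0, H (A * s) * ((c * s) ^ p * g s) =
      A⁻¹ * (c / A) ^ p * ∫ u in Ioi 0, u ^ p * H u * g (u / A) := by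
  have hscale := integral_comp_mul_left_Ioi
    (fun u => (c / A) ^ p * (u ^ p * H u * g (u / A))) 0 hA
  rw [mul_zero, smul_eq_mul] at hscale
  rw [mul_assoc, ← integral_const_mul, ← hscale]
  refine setIntegral_congr_fun measurableSet_Ioi fun s hs => ?_
  have hs : 0 < s := hs
  have hcs : c * s = c / A * (A * s) := by field_simp
  simp only [hcs, mul_rpow (div_pos hc hA).le (mul_pos hA hs).le, mul_div_cancel_left₀ s hA.ne']
  ring

lemma setIntegral_Hfun_mul_yukawa (v₁ v₂ κ₁ κ₂ : ℝ) {A : ℝ} (hA : 0 < A) :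
    ∫ s in Ioi 0, Hfun (A * s) * ((π * s) ^ (-(1 : ℝ) / 2) *
        (v₁ * exp (-κ₁ ^ 2 / (4 * s)) - v₂ * exp (-κ₂ ^ 2 / (4 * s)))) =
      A⁻¹ * (π / A) ^ (-(1 : ℝ) / 2) *
        (v₁ * reciprocalLaplace (fun u => u ^ (-(1 : ℝ) / 2) * Hfun u) (κ₁ ^ 2 / 4 * A) -
          v₂ * reciprocalLaplace (fun u => u ^ (-(1 : ℝ) / 2) * Hfun u) (κ₂ ^ 2 / 4 * A)) := by
  have hint : ∀ κ : ℝ, IntegrableOn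
      (fun u => u ^ (-(1 : ℝ) / 2) * Hfun u * exp (-(κ ^ 2 / 4 * A) / u)) (Ioi 0) :=
    fun κ => integrableOn_mul_exp_neg_div (integrableOn_rpow_mul_Hfun _) (by positivity)
  have hexponent : ∀ κ u : ℝ, -κ ^ 2 / (4 * (u / A)) = -(κ ^ 2 / 4 * A) / u := by
    intro κ u
    field_simp
  rw [setIntegral_Ioi_comp_mul_mul_rpow _
    (fun s => v₁ * exp (-κ₁ ^ 2 / (4 * s)) - v₂ * exp (-κ₂ ^ 2 / (4 * s))) _ hA pi_pos]
  congr 1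
  rw [reciprocalLaplace, reciprocalLaplace, ← integral_const_mul, ← integral_const_mul,
    ← integral_sub ((hint κ₁).const_mul v₁) ((hint κ₂).const_mul v₂)]
  congr! 2
  rw [hexponent, hexponent]
  ring

/-- Existence of a transition point for the double Yukawa potential: with
`v₁ > v₂ > 0`, `κ₁ > κ₂ > 0`, density
`ρ(s) := (πs)^{−1/2}(v₁e^{−κ₁²/(4s)} − v₂e^{−κ₂²/(4s)})` and
`E₂(A) := (1/2)∫₀^∞ H(As)ρ(s) ds`, the function `E₂` takes both strictly positive and
strictly negative values on `(0,∞)` and has a zero (transition point) `A* > 0`. -/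
theorem double_yukawa_exists_transition_point (v₁ v₂ κ₁ κ₂ : ℝ)
    (hv₂ : 0 < v₂) (hv : v₂ < v₁) (hκ₂ : 0 < κ₂) (hκ : κ₂ < κ₁) :
    let ρ : ℝ → ℝ := fun s =>
      (Real.pi * s) ^ (-(1 : ℝ) / 2) *
        (v₁ * Real.exp (-κ₁ ^ 2 / (4 * s)) - v₂ * Real.exp (-κ₂ ^ 2 / (4 * s)))
    let E₂ : ℝ → ℝ := fun A => (1 / 2) * ∫ s in Set.Ioi (0 : ℝ), Hfun (A * s) * ρ s
    (∃ A : ℝ, 0 < A ∧ 0 < E₂ A) ∧ (∃ A : ℝ, 0 < A ∧ E₂ A < 0) ∧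
      ∃ Astar : ℝ, 0 < Astar ∧ E₂ Astar = 0 := by
  intro ρ E₂
  have hmoment : ∀ k : ℕ,
      IntegrableOn (fun u : ℝ => u ^ k * (u ^ (-(1 : ℝ) / 2) * Hfun u)) (Ioi 0) := fun k =>
    (integrableOn_rpow_mul_Hfun (k + -(1 : ℝ) / 2)).congr_fun (fun u hu => by
      simp only [rpow_add hu, rpow_natCast, mul_assoc]) measurableSet_Ioi
  have hpos : ∀ u : ℝ, 0 < u → 0 < u ^ (-(1 : ℝ) / 2) * Hfun u := fun u hu =>
    mul_pos (rpow_pos_of_pos hu _) (Hfun_pos hu)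
  obtain ⟨⟨A, hA, hFA⟩, ⟨B, hB, hFB⟩, ⟨Z, hZ, hFZ⟩⟩ :=
    reciprocalLaplace_difference_changes_sign (a := κ₁ ^ 2 / 4) (b := κ₂ ^ 2 / 4)
      hmoment hpos hv₂ hv (by positivity) (by gcongr)
  have hE₂ := fun A (hA : 0 < A) => setIntegral_Hfun_mul_yukawa v₁ v₂ κ₁ κ₂ hA
  refine ⟨⟨A, hA, ?_⟩, ⟨B, hB, ?_⟩, ⟨Z, hZ, ?_⟩⟩
  · simp only [E₂, ρ, hE₂ A hA]
    positivity
  · simp only [E₂, ρ, hE₂ B hB]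
    exact mul_neg_of_pos_of_neg (by positivity) (mul_neg_of_pos_of_neg (by positivity) hFB)
  · simp only [E₂, ρ, hE₂ Z hZ, hFZ, mul_zero]
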